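/- Let ν be a probability measure on [-π,π] with density p, and for r ≥ 1 define the r-fold circular convolution constraint sum S_r := Σ_{(m_1,...,m_r) ∈ ℤ^r, m_1+⋯+m_r = 0} Π_{k=1}^r a(m_k), where a(m) = ∫_{-π}^{π} e^{imx} p(x) dx. If p ∈ L^r([-π,π]) and all a(m) ≥ 0, then S_r converges and S_r = (2π)^{r-1} ∫_{-π}^{π} p(x)^r dx. -/

import Mathlib

open Real MeasureTheory Set

namespace CFS
open AddCircle Filter Topology
open scoped ENNReal

set_option linter.unusedSectionVars false
variable {T : ℝ} [hT : Fact (0 < T)]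

/-- Fejer weights. -/
noncomputable def cc (N : ℕ) (m : ℤ) : ℝ :=
  (((Finset.range (N+1) ×ˢ Finset.range (N+1)).filter
    (fun q : ℕ × ℕ => (q.1 : ℤ) - q.2 = m)).card : ℝ) / (N + 1)

lemma cc_nonneg (N : ℕ) (m : ℤ) : 0 ≤ cc N m := by unfold cc; positivity

lemma cc_le_one (N : ℕ) (m : ℤ) : cc N m ≤ 1 := by
  unfold cc
  rw [div_le_one (by positivity)]
  have : ((Finset.range (N+1) ×ˢ Finset.range (N+1)).filter
    (fun q : ℕ × ℕ => (q.1 : ℤ) - q.2 = m)).card ≤ (Finset.range (N+1)).card := by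
    apply Finset.card_le_card_of_injOn Prod.fst
    · intro q hq
      simp at hq ⊢
      omega
    · intro q hq q' hq' h
      simp at hq hq' h
      ext <;> omega
  rw [Finset.card_range] at this
  exact_mod_cast this

lemma cc_ge (N : ℕ) (m : ℤ) : 1 - (m.natAbs : ℝ) / (N + 1) ≤ cc N m := by
  unfold cc
  rw [sub_le_iff_le_add, ← add_div, le_div_iff₀ (by positivity), one_mul]
  have : (Finset.range (N+1 - m.natAbs)).card ≤
    ((Finset.range (N+1) ×ˢ Finset.range (N+1)).filter
    (fun q : ℕ × ℕ => (q.1 : ℤ) - q.2 = m)).card := by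
    apply Finset.card_le_card_of_injOn (fun j : ℕ => ((j + m.toNat, j + (-m).toNat) : ℕ × ℕ))
    · intro q hq
      simp at hq ⊢
      omega
    · intro q hq q' hq' h
      simp at hq hq' h
      omega
  rw [Finset.card_range] at this
  have h2 : N + 1 ≤ ((Finset.range (N+1) ×ˢ Finset.range (N+1)).filter
    (fun q : ℕ × ℕ => (q.1 : ℤ) - q.2 = m)).card + m.natAbs := by omega
  exact_mod_cast h2

lemma cc_tendsto (m : ℤ) : Tendsto (fun N => cc N m) atTop (𝓝 1) := by
  refine tendsto_of_tendsto_of_tendsto_of_le_of_le ?_ tendsto_const_nhds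
    (fun N => cc_ge N m) (fun N => cc_le_one N m)
  have : Tendsto (fun N : ℕ => (m.natAbs : ℝ) / ((N : ℝ) + 1)) atTop (𝓝 0) :=
    tendsto_const_nhds.div_atTop (tendsto_atTop_add_const_right _ _ tendsto_natCast_atTop_atTop)
  simpa using this.const_sub 1

lemma cc_zero (N : ℕ) : cc N 0 = 1 := by
  apply le_antisymm (cc_le_one _ _)
  simpa using cc_ge N 0

lemma cc_out (N : ℕ) (m : ℤ) (hm : m ∉ Finset.Icc (-(N:ℤ)) N) : cc N m = 0 := by
  unfold cc
  rw [Finset.filter_eq_empty_iff.2]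
  · simp
  · intro q hq h
    simp at hq hm
    omega

/-- Fejer kernel. -/
noncomputable def kr (N : ℕ) (x : AddCircle T) : ℝ :=
  ‖∑ j ∈ Finset.range (N+1), (fourier (j:ℤ) x : ℂ)‖ ^ 2 / (N + 1)

lemma kr_nonneg (N : ℕ) (x : AddCircle T) : 0 ≤ kr N x := by unfold kr; positivity

lemma kr_cont (N : ℕ) : Continuous (kr N : AddCircle T → ℝ) := by
  unfold kr; fun_prop

lemma kr_eq (N : ℕ) (x : AddCircle T) :
    (kr N x : ℂ) = ∑ m ∈ Finset.Icc (-(N:ℤ)) N, (cc N m : ℂ) * fourier m x := by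
  unfold kr
  push_cast
  rw [← Complex.mul_conj', map_sum, Finset.sum_mul_sum, ← Finset.sum_product',
    ← Finset.sum_fiberwise_of_maps_to (t := Finset.Icc (-(N:ℤ)) N)
      (g := fun q : ℕ × ℕ => (q.1 : ℤ) - q.2), Finset.sum_div]
  · refine Finset.sum_congr rfl fun m hm => ?_
    rw [Finset.sum_congr rfl (g := fun _ => (fourier m x : ℂ))]
    · rw [Finset.sum_const, nsmul_eq_mul]
      unfold cc
      push_cast
      ring
    · intro q hq
      rw [← fourier_neg, ← fourier_add, ← sub_eq_add_neg, (Finset.mem_filter.1 hq).2]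
  · intro q hq
    simp at hq ⊢
    omega

lemma integral_fourier (n : ℤ) :
    ∫ x : AddCircle T, (fourier n x : ℂ) ∂haarAddCircle = if n = 0 then 1 else 0 := by
  have := congrFun (fourierCoeff_fourier (T := T) n) 0
  simpa [fourierCoeff, Pi.single_apply, eq_comm] using this

lemma cont_int {f : AddCircle T → ℂ} (hf : Continuous f) : Integrable f haarAddCircle :=
  hf.integrable_of_hasCompactSupport (HasCompactSupport.of_compactSpace f)

lemma integral_kr (N : ℕ) : ∫ x : AddCircle T, kr N x ∂haarAddCircle = 1 := by
  have : ((∫ x : AddCircle T, kr N x ∂haarAddCircle : ℝ) : ℂ) = 1 := by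
    rw [← integral_complex_ofReal]
    simp_rw [kr_eq]
    rw [integral_finsetSum _ (fun i _ => cont_int (by fun_prop))]
    simp_rw [integral_const_mul, integral_fourier]
    simp [cc_zero]
  exact_mod_cast this

/-- Fejer mean. -/
noncomputable def sg (N : ℕ) (f : AddCircle T → ℂ) (x : AddCircle T) : ℂ :=
  ∑ m ∈ Finset.Icc (-(N:ℤ)) N, (cc N m : ℂ) * fourierCoeff f m * fourier m x

lemma fourier_sub' (m : ℤ) (x y : AddCircle T) :
    (fourier m (x - y) : ℂ) = fourier m x * fourier (-m) y := by
  rw [fourier_apply, fourier_apply, fourier_apply, ← Circle.coe_mul, ← toCircle_add]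
  congr 2
  simp [sub_eq_add_neg]

lemma sg_eq (N : ℕ) (f : AddCircle T → ℂ) (hf : Integrable f haarAddCircle) (x : AddCircle T) :
    sg N f x = ∫ y, (kr N y : ℂ) * f (x - y) ∂haarAddCircle := by
  rw [← integral_sub_left_eq_self _ _ x]
  simp only [sub_sub_cancel, kr_eq, Finset.sum_mul, fourier_sub']
  rw [integral_finsetSum]
  · unfold sg
    refine Finset.sum_congr rfl fun m hm => ?_
    simp_rw [fourierCoeff, mul_assoc]
    rw [integral_const_mul, integral_const_mul, mul_comm (fourier m x)]
    simp
  · intro m hm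
    have := (hf.fourier_smul (-m)).const_mul ((cc N m : ℂ) * fourier m x)
    simpa [mul_assoc] using this

lemma sg_cont (N : ℕ) (f : AddCircle T → ℂ) : Continuous (sg N f) := by
  unfold sg; fun_prop

lemma sg_congr (N : ℕ) {f g : AddCircle T → ℂ} (h : f =ᵐ[haarAddCircle] g) : sg N f = sg N g := by
  funext x
  unfold sg
  rw [fourierCoeff_congr_ae h]

lemma sg_add (N : ℕ) {f g : AddCircle T → ℂ} (hf : Integrable f haarAddCircle)
    (hg : Integrable g haarAddCircle) : sg N (f + g) = sg N f + sg N g := by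
  funext x
  simp only [sg, fourierCoeff.add hf hg, Pi.add_apply, ← Finset.sum_add_distrib]
  exact Finset.sum_congr rfl fun m _ => by ring

lemma sg_smul (N : ℕ) (f : AddCircle T → ℂ) (c : ℂ) : sg N (c • f) = c • sg N f := by
  funext x
  simp only [sg, fourierCoeff.const_smul, Pi.smul_apply, smul_eq_mul]
  rw [Finset.mul_sum]
  exact Finset.sum_congr rfl fun m _ => by ring

lemma sg_fourier (N : ℕ) (n : ℤ) :
    sg N (fourier n : AddCircle T → ℂ) = (cc N n : ℂ) • (fourier n : AddCircle T → ℂ) := by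
  funext x
  simp only [sg, fourierCoeff_fourier, Pi.single_apply, Pi.smul_apply, smul_eq_mul]
  by_cases h : n ∈ Finset.Icc (-(N:ℤ)) N
  · rw [Finset.sum_eq_single n]
    · simp
    · intro b _ hb; simp [hb]
    · intro h'; exact absurd h h'
  · rw [cc_out N n h, Finset.sum_eq_zero]
    · simp
    · intro m hm
      have : m ≠ n := by rintro rfl; exact h hm
      simp [this]

lemma sg_bound_meas (N r : ℕ) (hr : 1 ≤ r) (f : AddCircle T → ℂ) (hm : Measurable f)
    (hf : Integrable f haarAddCircle) :
    eLpNorm (sg N f) r haarAddCircle ≤ eLpNorm f r haarAddCircle := by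
  set κ : Measure (AddCircle T) := haarAddCircle.withDensity (fun y => ENNReal.ofReal (kr N y)) with hκ
  have hkm : Measurable (fun y : AddCircle T => ENNReal.ofReal (kr N y)) :=
    (kr_cont N).measurable.ennreal_ofReal
  have hki : Integrable (kr N : AddCircle T → ℝ) haarAddCircle :=
    (kr_cont N).integrable_of_hasCompactSupport (HasCompactSupport.of_compactSpace _)
  have hprob : IsProbabilityMeasure κ := by
    constructor
    rw [hκ, withDensity_apply _ MeasurableSet.univ, Measure.restrict_univ,
      ← ofReal_integral_eq_lintegral_ofReal hki (ae_of_all _ fun y => kr_nonneg N y), integral_kr]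
    simp
  have hr0 : (0:ℝ) < r := by exact_mod_cast hr
  have key : ∀ x, ‖sg N f x‖ₑ ^ (r:ℝ) ≤ ∫⁻ y, ‖f (x - y)‖ₑ ^ (r:ℝ) ∂κ := by
    intro x
    have h1 : ‖sg N f x‖ₑ ≤ ∫⁻ y, ‖f (x - y)‖ₑ ∂κ := by
      rw [sg_eq N f hf, hκ, lintegral_withDensity_eq_lintegral_mul _ hkm (by fun_prop)]
      refine (enorm_integral_le_lintegral_enorm _).trans (le_of_eq ?_)
      refine lintegral_congr fun y => ?_
      rw [enorm_mul, Pi.mul_apply]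
      congr 1
      rw [← ofReal_norm, Complex.norm_real, Real.norm_of_nonneg (kr_nonneg N y)]
    have h2 := eLpNorm'_le_eLpNorm'_of_exponent_le (μ := κ) (f := fun y => f (x - y))
      (p := 1) (q := r) one_pos (by exact_mod_cast hr)
      (by exact (by fun_prop : Measurable (fun y => f (x - y))).aestronglyMeasurable)
    simp only [eLpNorm', ENNReal.rpow_one, one_div, inv_one] at h2
    calc _ ≤ (∫⁻ y, ‖f (x - y)‖ₑ ∂κ) ^ (r:ℝ) := by gcongr
      _ ≤ _ := by
        refine (ENNReal.rpow_le_rpow h2 hr0.le).trans (le_of_eq ?_)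
        rw [← ENNReal.rpow_mul, inv_mul_cancel₀ hr0.ne', ENNReal.rpow_one]
  have hrne : (r : ℝ≥0∞) ≠ 0 := by simp; omega
  rw [eLpNorm_eq_lintegral_rpow_enorm_toReal hrne (by simp),
    eLpNorm_eq_lintegral_rpow_enorm_toReal hrne (by simp)]
  simp only [ENNReal.toReal_natCast]
  gcongr ?_ ^ _
  calc _ ≤ ∫⁻ x, ∫⁻ y, ‖f (x - y)‖ₑ ^ (r:ℝ) ∂κ ∂haarAddCircle := lintegral_mono key
    _ = ∫⁻ y, ∫⁻ x, ‖f (x - y)‖ₑ ^ (r:ℝ) ∂haarAddCircle ∂κ := by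
      rw [lintegral_lintegral_swap]
      have : Measurable (fun z : AddCircle T × AddCircle T => ‖f (z.1 - z.2)‖ₑ ^ (r:ℝ)) := by
        fun_prop
      exact this.aemeasurable
    _ = ∫⁻ y, ∫⁻ x, ‖f x‖ₑ ^ (r:ℝ) ∂haarAddCircle ∂κ := by
      refine lintegral_congr fun y => ?_
      exact lintegral_sub_right_eq_self (fun x => ‖f x‖ₑ ^ (r:ℝ)) y
    _ = _ := by simp

lemma sg_bound (N r : ℕ) (hr : 1 ≤ r) (f : AddCircle T → ℂ) 
    (hf : MemLp f r haarAddCircle) :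
    eLpNorm (sg N f) r haarAddCircle ≤ eLpNorm f r haarAddCircle := by
  have hm := hf.1
  have h := hm.ae_eq_mk
  rw [sg_congr N h, eLpNorm_congr_ae h]
  refine sg_bound_meas N r hr _ hm.stronglyMeasurable_mk.measurable ?_
  exact (hf.integrable (by exact_mod_cast hr)).congr h

/-- Convergence predicate. -/
def Good (r : ℕ) (f : AddCircle T → ℂ) : Prop :=
  MemLp f r haarAddCircle ∧
    Tendsto (fun N => eLpNorm (sg N f - f) r haarAddCircle) atTop (𝓝 0)

lemma sg_memLp (N r : ℕ) (f : AddCircle T → ℂ) : MemLp (sg N f) r haarAddCircle := by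
  exact (sg_cont N f).memLp_of_hasCompactSupport (HasCompactSupport.of_compactSpace _)

lemma good_congr {r : ℕ} {f g : AddCircle T → ℂ} (h : f =ᵐ[haarAddCircle] g) (hf : Good r f) :
    Good r g := by
  refine ⟨hf.1.ae_eq h, hf.2.congr fun N => ?_⟩
  rw [sg_congr N h]
  exact eLpNorm_congr_ae ((ae_eq_refl _).sub h)

lemma good_add {r : ℕ} (hr : 1 ≤ r) {f g : AddCircle T → ℂ} (hf : Good r f) (hg : Good r g) :
    Good r (f + g) := by
  have h1 : (1:ℝ≥0∞) ≤ r := by exact_mod_cast hr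
  refine ⟨hf.1.add hg.1, ?_⟩
  refine tendsto_of_tendsto_of_tendsto_of_le_of_le tendsto_const_nhds
    (by simpa using hf.2.add hg.2) (fun _ => zero_le) fun N => ?_
  rw [sg_add N (hf.1.integrable h1) (hg.1.integrable h1), add_sub_add_comm]
  exact eLpNorm_add_le ((sg_memLp N r f).sub hf.1).1 ((sg_memLp N r g).sub hg.1).1 h1

lemma good_smul {r : ℕ} {f : AddCircle T → ℂ} (c : ℂ) (hf : Good r f) :
    Good r (c • f) := by
  refine ⟨hf.1.const_smul c, ?_⟩
  simp_rw [sg_smul, ← smul_sub, eLpNorm_const_smul]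
  simpa using ENNReal.Tendsto.const_mul hf.2 (Or.inr (by simp))

lemma good_fourier {r : ℕ} (n : ℤ) : Good r (fourier n : AddCircle T → ℂ) := by
  have hm : MemLp (fourier n : AddCircle T → ℂ) r haarAddCircle :=
    (fourier n : C(AddCircle T, ℂ)).continuous.memLp_of_hasCompactSupport
      (HasCompactSupport.of_compactSpace _)
  refine ⟨hm, ?_⟩
  have : ∀ N, eLpNorm (sg N (fourier n : AddCircle T → ℂ) - (fourier n : AddCircle T → ℂ)) r haarAddCircle
      = ‖((cc N n : ℂ) - 1)‖ₑ * eLpNorm (fourier n : AddCircle T → ℂ) r haarAddCircle := by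
    intro N
    rw [← eLpNorm_const_smul, sub_smul, one_smul, sg_fourier]
  simp_rw [this]
  have h0 : Tendsto (fun N => ‖((cc N n : ℂ) - 1)‖ₑ) atTop (𝓝 0) := by
    have : Tendsto (fun N => ((cc N n : ℂ) - 1)) atTop (𝓝 0) := by
      have := (Complex.continuous_ofReal.tendsto _).comp (cc_tendsto n)
      simpa using this.sub_const 1
    simpa using this.enorm
  simpa using ENNReal.Tendsto.mul_const h0 (Or.inr hm.2.ne)

lemma good_all {r : ℕ} (hr : 1 ≤ r) {f : AddCircle T → ℂ} (hf : MemLp f r haarAddCircle) :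
    Good r f := by
  have h1 : (1:ℝ≥0∞) ≤ r := by exact_mod_cast hr
  have : Fact ((1:ℝ≥0∞) ≤ r) := ⟨h1⟩
  have hspan : ∀ g ∈ Submodule.span ℂ (range (@fourierLp T _ r _)), Good r (g : AddCircle T → ℂ) := by
    intro g hg
    induction hg using Submodule.span_induction with
    | mem x h =>
      obtain ⟨n, rfl⟩ := h
      exact good_congr (coeFn_fourierLp r n).symm (good_fourier n)
    | zero =>
      refine good_congr (Lp.coeFn_zero _ _ _).symm ?_
      simpa using good_smul 0 (good_fourier (T := T) (r := r) 0)
    | add x y _ _ hx hy => exact good_congr (Lp.coeFn_add x y).symm (good_add hr hx hy)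
    | smul a x _ hx => exact good_congr (Lp.coeFn_smul a x).symm (good_smul a hx)
  refine ⟨hf, ?_⟩
  rw [ENNReal.tendsto_nhds_zero]
  intro ε hε
  have hε3 : 0 < ε / 3 := ENNReal.div_pos hε.ne' (by simp)
  have hmem : hf.toLp f ∈ closure (Submodule.span ℂ (range (@fourierLp T _ r _)) : Set _) := by
    rw [← Submodule.topologicalClosure_coe, span_fourierLp_closure_eq_top (by simp)]
    trivial
  obtain ⟨g, hg, hd⟩ := EMetric.mem_closure_iff.1 hmem (ε/3) hε3
  set g' : AddCircle T → ℂ := ⇑g with hg'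
  have hd' : eLpNorm (f - g') r haarAddCircle ≤ ε/3 := by
    rw [Lp.edist_def] at hd
    refine le_of_eq_of_le (eLpNorm_congr_ae ?_) hd.le
    exact hf.coeFn_toLp.symm.sub (ae_eq_refl _)
  obtain ⟨hgm, hgt⟩ := hspan g hg
  filter_upwards [ENNReal.tendsto_nhds_zero.1 hgt (ε/3) hε3] with N hN
  have hfg := hf.sub hgm
  have e1 : sg N f - f = sg N (f - g') + ((sg N g' - g') + -(f - g')) := by
    have : sg N f = sg N (f - g') + sg N g' := by
      rw [← sg_add N (hfg.integrable h1) (hgm.integrable h1), sub_add_cancel]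
    rw [this]; abel
  rw [e1]
  calc _ ≤ eLpNorm (sg N (f - g')) r haarAddCircle +
        eLpNorm ((sg N g' - g') + -(f - g')) r haarAddCircle :=
        eLpNorm_add_le (sg_memLp N r _).1 (((sg_memLp N r _).sub hgm).add hfg.neg).1 h1
    _ ≤ eLpNorm (sg N (f - g')) r haarAddCircle + (eLpNorm (sg N g' - g') r haarAddCircle +
        eLpNorm (-(f - g')) r haarAddCircle) := by
        gcongr
        exact eLpNorm_add_le ((sg_memLp N r _).sub hgm).1 hfg.neg.1 h1
    _ ≤ ε/3 + (ε/3 + ε/3) := by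
        rw [eLpNorm_neg]
        gcongr
        exact (sg_bound N r hr _ hfg).trans hd'
    _ = ε := by rw [← add_assoc, ENNReal.add_thirds]


lemma norm_pow_integral {r : ℕ} (hr : 1 ≤ r) {f : AddCircle T → ℂ}
    (hf : MemLp f r haarAddCircle) :
    (eLpNorm f r haarAddCircle).toReal ^ r = ∫ x, ‖f x‖ ^ r ∂haarAddCircle := by
  have hrne : (r : ℝ≥0∞) ≠ 0 := by simp; omega
  have h0 : 0 ≤ ∫ x, ‖f x‖ ^ r ∂haarAddCircle := integral_nonneg fun x => by positivity
  rw [hf.eLpNorm_eq_integral_rpow_norm hrne (by simp)]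
  simp only [ENNReal.toReal_natCast, Real.rpow_natCast]
  rw [ENNReal.toReal_ofReal (Real.rpow_nonneg h0 _), Real.rpow_inv_natCast_pow h0 (by omega)]

lemma tendsto_norm {r : ℕ} (hr : 1 ≤ r) {f : AddCircle T → ℂ} (hf : MemLp f r haarAddCircle) :
    Tendsto (fun N => ∫ x, ‖sg N f x‖ ^ r ∂haarAddCircle) atTop
      (𝓝 (∫ x, ‖f x‖ ^ r ∂haarAddCircle)) := by
  have h1 : (1:ℝ≥0∞) ≤ r := by exact_mod_cast hr
  simp_rw [← norm_pow_integral hr hf, ← norm_pow_integral hr (sg_memLp _ r f)]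
  refine Tendsto.pow ?_ r
  have hd : Tendsto (fun N => (eLpNorm (sg N f - f) r haarAddCircle).toReal) atTop (𝓝 0) := by
    simpa [Function.comp_def] using (ENNReal.tendsto_toReal (by simp)).comp (good_all hr hf).2
  refine tendsto_of_tendsto_of_tendsto_of_le_of_le
    (by simpa using hd.const_sub (eLpNorm f r haarAddCircle).toReal) tendsto_const_nhds ?_ ?_
  · intro N
    have hs := sg_memLp N r f
    have hsd := hs.sub hf
    have : eLpNorm f r haarAddCircle ≤
        eLpNorm (sg N f) r haarAddCircle + eLpNorm (sg N f - f) r haarAddCircle := by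
      calc _ = eLpNorm (sg N f - (sg N f - f)) r haarAddCircle := by rw [sub_sub_cancel]
        _ ≤ _ := eLpNorm_sub_le hs.1 hsd.1 h1
    have h2 := ENNReal.toReal_mono (ENNReal.add_ne_top.2 ⟨hs.2.ne, hsd.2.ne⟩) this
    rw [ENNReal.toReal_add hs.2.ne hsd.2.ne] at h2
    simp only
    linarith
  · intro N
    exact ENNReal.toReal_mono hf.2.ne (sg_bound N r hr f hf)

lemma integral_sg_pow (r N : ℕ) (f : AddCircle T → ℂ) :
    ∫ x, sg N f x ^ r ∂haarAddCircle =
      ∑ v ∈ Fintype.piFinset (fun _ : Fin r => Finset.Icc (-(N:ℤ)) N),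
        if ∑ i, v i = 0 then ∏ k, ((cc N (v k) : ℂ) * fourierCoeff f (v k)) else 0 := by
  have hprod : ∀ (v : Fin r → ℤ) (x : AddCircle T),
      ∏ k, (fourier (v k) x : ℂ) = fourier (∑ k, v k) x := by
    intro v x
    have : ∀ s : Finset (Fin r), ∏ k ∈ s, (fourier (v k) x : ℂ) = fourier (∑ k ∈ s, v k) x := by
      intro s
      induction s using Finset.induction_on with
      | empty => simp
      | insert a s ha ih => rw [Finset.prod_insert ha, Finset.sum_insert ha, ih, fourier_add]
    exact this _
  have h : ∀ x, sg N f x ^ r = ∑ v ∈ Fintype.piFinset (fun _ : Fin r => Finset.Icc (-(N:ℤ)) N),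
      (∏ k, ((cc N (v k) : ℂ) * fourierCoeff f (v k))) * fourier (∑ k, v k) x := by
    intro x
    have h1 : sg N f x ^ r = ∏ _k : Fin r, sg N f x := by simp
    rw [h1]
    unfold sg
    rw [Finset.prod_univ_sum]
    refine Finset.sum_congr rfl fun v _ => ?_
    rw [Finset.prod_mul_distrib, hprod]
  simp_rw [h]
  rw [integral_finsetSum _ (fun i _ => cont_int (by fun_prop))]
  refine Finset.sum_congr rfl fun v _ => ?_
  rw [integral_const_mul, integral_fourier]
  simp

lemma circle_main {r : ℕ} (hr : 1 ≤ r) (q : AddCircle T → ℝ) (hq0 : ∀ x, 0 ≤ q x)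
    (hq : MemLp (fun x => (q x : ℂ)) r haarAddCircle) (b : ℤ → ℝ) (hb : ∀ m, 0 ≤ b m)
    (hbf : ∀ m, fourierCoeff (fun x => (q x : ℂ)) m = b m) :
    HasSum (fun v : {v : Fin r → ℤ // ∑ i, v i = 0} => ∏ k, b (v.1 k))
      (∫ x, q x ^ r ∂haarAddCircle) := by
  set Q : AddCircle T → ℂ := fun x => (q x : ℂ) with hQ
  have h1 : (1:ℝ≥0∞) ≤ r := by exact_mod_cast hr
  set I : ℕ → ℝ := fun N => ∫ x, ‖sg N Q x‖ ^ r ∂haarAddCircle with hI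
  have hlim : Tendsto I atTop (𝓝 (∫ x, q x ^ r ∂haarAddCircle)) := by
    have := tendsto_norm hr hq
    simpa [hQ, abs_of_nonneg (hq0 _)] using this
  set F : ℕ → (Fin r → ℤ) → ℝ := fun N v =>
    if ∑ i, v i = 0 then ∏ k, (cc N (v k) * b (v k)) else 0 with hF
  set G : (Fin r → ℤ) → ℝ := fun v => if ∑ i, v i = 0 then ∏ k, b (v k) else 0 with hG
  have hIF : ∀ N, HasSum (F N) (I N) := by
    intro N
    have hpt : ∀ x, sg N Q x = (‖sg N Q x‖ : ℂ) := by
      intro x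
      have : sg N Q x = ((∫ y, kr N y * q (x - y) ∂haarAddCircle : ℝ) : ℂ) := by
        rw [sg_eq N Q (hq.integrable h1), ← integral_complex_ofReal]
        simp [hQ]
      rw [this, Complex.norm_real, Real.norm_of_nonneg]
      exact integral_nonneg fun y => mul_nonneg (kr_nonneg _ _) (hq0 _)
    have hIs : I N = ∑ v ∈ Fintype.piFinset (fun _ : Fin r => Finset.Icc (-(N:ℤ)) N), F N v := by
      have : ((I N : ℝ) : ℂ) = ∫ x, sg N Q x ^ r ∂haarAddCircle := by
        rw [hI]
        simp only
        rw [← integral_complex_ofReal]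
        refine integral_congr_ae (ae_of_all _ fun x => ?_)
        simp only
        push_cast
        rw [← hpt]
      rw [integral_sg_pow] at this
      apply Complex.ofReal_injective
      rw [this]
      push_cast
      refine Finset.sum_congr rfl fun v _ => ?_
      simp only [hF, hbf]
      split_ifs <;> simp
    rw [hIs]
    apply hasSum_sum_of_ne_finset_zero
    intro v hv
    simp only [hF]
    split_ifs with h
    · rw [Fintype.mem_piFinset] at hv
      push Not at hv
      obtain ⟨k, hk⟩ := hv
      exact Finset.prod_eq_zero (Finset.mem_univ k) (by rw [cc_out N _ hk, zero_mul])
    · rfl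
  have hF0 : ∀ N v, 0 ≤ F N v := by
    intro N v
    simp only [hF]
    split_ifs
    · exact Finset.prod_nonneg fun k _ => mul_nonneg (cc_nonneg _ _) (hb _)
    · rfl
  have hG0 : ∀ v, 0 ≤ G v := by
    intro v
    simp only [hG]
    split_ifs
    · exact Finset.prod_nonneg fun k _ => hb _
    · rfl
  have hFG : ∀ N v, F N v ≤ G v := by
    intro N v
    simp only [hF, hG]
    split_ifs
    · refine Finset.prod_le_prod (fun k _ => mul_nonneg (cc_nonneg _ _) (hb _)) fun k _ => ?_
      exact mul_le_of_le_one_left (hb _) (cc_le_one _ _)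
    · rfl
  have hFlim : ∀ v, Tendsto (fun N => F N v) atTop (𝓝 (G v)) := by
    intro v
    simp only [hF, hG]
    split_ifs
    · refine tendsto_finsetProd _ fun k _ => ?_
      simpa using (cc_tendsto (v k)).mul_const (b (v k))
    · exact tendsto_const_nhds
  have hsum : Summable G := by
    refine summable_of_sum_le hG0 (c := ∫ x, q x ^ r ∂haarAddCircle) fun u => ?_
    refine le_of_tendsto_of_tendsto' (tendsto_finsetSum u fun v _ => hFlim v) hlim fun N => ?_
    exact sum_le_hasSum u (fun v _ => hF0 N v) (hIF N)
  have hlim2 : Tendsto (fun N => ∑' v, F N v) atTop (𝓝 (∑' v, G v)) := by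
    refine tendsto_tsum_of_dominated_convergence hsum hFlim (Eventually.of_forall fun N v => ?_)
    rw [Real.norm_of_nonneg (hF0 N v)]
    exact hFG N v
  have heq : ∑' v, G v = ∫ x, q x ^ r ∂haarAddCircle := by
    refine tendsto_nhds_unique hlim2 ?_
    simpa only [(hIF _).tsum_eq] using hlim
  have hGs : HasSum G (∫ x, q x ^ r ∂haarAddCircle) := heq ▸ hsum.hasSum
  have := (hasSum_subtype_iff_indicator (s := {v : Fin r → ℤ | ∑ i, v i = 0})
    (f := fun v => ∏ k, b (v k)) (a := ∫ x, q x ^ r ∂haarAddCircle)).2 (by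
      convert hGs using 1
      funext v
      simp [hG, Set.indicator_apply])
  exact this

end CFS

theorem constrained_fourier_sum_eq_parseval (r : ℕ) (hr : 1 ≤ r)
    (p : ℝ → ℝ)
    (hp0 : ∀ x, 0 ≤ p x)
    (hint : IntegrableOn p (Icc (-π) π))
    (hprob : (∫ x in Icc (-π) π, p x) = 1)
    (hLr : IntegrableOn (fun x => p x ^ r) (Icc (-π) π))
    (a : ℤ → ℂ)
    (ha : ∀ m : ℤ, a m = ∫ x in Icc (-π) π, Complex.exp (m * x * Complex.I) * (p x : ℂ))
    (hpos : ∀ m : ℤ, 0 ≤ (a m).re ∧ (a m).im = 0) :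
    HasSum (fun v : {v : Fin r → ℤ // ∑ i, v i = 0} => ∏ k, a (v.1 k))
      (((2 * π) ^ (r - 1) * ∫ x in Icc (-π) π, p x ^ r : ℝ) : ℂ) := by
  have hT : Fact (0 < 2 * π) := ⟨Real.two_pi_pos⟩
  have hpp : -π + 2 * π = π := by ring
  have hle : -π ≤ π := by linarith [Real.pi_pos]
  have h2pi : (2 * π) ≠ 0 := hT.out.ne'
  have har : ∀ m, a m = ((a m).re : ℂ) := fun m => Complex.ext (by simp) (by simp [(hpos m).2])
  have hrne : (r : ENNReal) ≠ 0 := by simp; omega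
  set q : AddCircle (2 * π) → ℝ := AddCircle.liftIoc (2 * π) (-π) p with hq
  have hQ : (fun x => (q x : ℂ)) = AddCircle.liftIoc (2 * π) (-π) (fun x => (p x : ℂ)) := rfl
  have hmem : MemLp (fun x => (q x : ℂ)) r AddCircle.haarAddCircle := by
    rw [memLp_haarAddCircle_iff, hQ]
    apply MemLp.memLp_liftIoc
    rw [hpp, Measure.restrict_congr_set Ioc_ae_eq_Icc]
    have hm : AEStronglyMeasurable (fun x => (p x : ℂ)) (volume.restrict (Icc (-π) π)) :=
      Complex.continuous_ofReal.comp_aestronglyMeasurable hint.1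
    rw [← integrable_norm_rpow_iff hm hrne (by simp)]
    simpa [abs_of_nonneg (hp0 _), IntegrableOn] using hLr
  have hcoef : ∀ m, fourierCoeff (fun x => (q x : ℂ)) m = (((a m).re / (2 * π) : ℝ) : ℂ) := by
    intro m
    have h1 : a m = ∫ x in Icc (-π) π, Complex.exp (-(m * x * Complex.I)) * (p x : ℂ) := by
      have : a m = (starRingEnd ℂ) (a m) := by rw [har m, Complex.conj_ofReal]
      rw [this, ha m, ← integral_conj]
      refine integral_congr_ae (Filter.Eventually.of_forall fun x => ?_)
      simp [← Complex.exp_conj]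
    rw [fourierCoeff_eq_intervalIntegral _ _ (-π), hpp, intervalIntegral.integral_of_le hle,
      Complex.ofReal_div, ← har m, h1, integral_Icc_eq_integral_Ioc]
    have : ∫ x in Ioc (-π) π, (fourier (-m) (x : AddCircle (2 * π)) : ℂ) • ((q x : ℝ) : ℂ)
        = ∫ x in Ioc (-π) π, Complex.exp (-(m * x * Complex.I)) * (p x : ℂ) := by
      refine setIntegral_congr_fun measurableSet_Ioc fun x hx => ?_
      have e : q (x : AddCircle (2 * π)) = p x :=
        AddCircle.liftIoc_coe_apply (by rwa [hpp])
      simp only [e, fourier_coe_apply, smul_eq_mul]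
      congr 2
      have : (π : ℂ) ≠ 0 := by exact_mod_cast Real.pi_ne_zero
      push_cast
      field_simp
    rw [this, Complex.real_smul]
    push_cast
    ring
  have hI : ∫ x, q x ^ r ∂AddCircle.haarAddCircle
      = (2 * π)⁻¹ * ∫ x in Icc (-π) π, p x ^ r := by
    have e : (fun x => q x ^ r) = AddCircle.liftIoc (2 * π) (-π) (fun x => p x ^ r) := rfl
    rw [AddCircle.integral_haarAddCircle, e, AddCircle.integral_liftIoc_eq_intervalIntegral, hpp,
      intervalIntegral.integral_of_le hle, integral_Icc_eq_integral_Ioc, smul_eq_mul]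
  have main := CFS.circle_main hr q (fun x => hp0 _) hmem (fun m => (a m).re / (2 * π))
    (fun m => div_nonneg (hpos m).1 hT.out.le) hcoef
  rw [hI] at main
  have main2 := main.mul_left ((2 * π) ^ r)
  have main3 := Complex.hasSum_ofReal.2 main2
  convert main3 using 1
  · funext v
    rw [Finset.prod_div_distrib]
    simp only [Finset.prod_const, Finset.card_univ, Fintype.card_fin]
    rw [mul_div_cancel₀ _ (pow_ne_zero r h2pi), Complex.ofReal_prod]
    exact Finset.prod_congr rfl fun k _ => har _
  · congr 1
    obtain ⟨s, rfl⟩ : ∃ s, r = s + 1 := ⟨r - 1, by omega⟩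
    rw [Nat.add_sub_cancel, pow_succ]
    field_simp
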